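/- There do not exist integers x, y, z such that x^3 + y^3 + 2*z^3 = 2, x + y ≡ 2 (mod 8), and z ≡ 2 (mod 4). -/

import Mathlib

/-!
The obstruction is the quaternion algebra `(-3 s (s + w - 2), 2 (2 - s))` with `s = x + y`,
`w = 2 z`, on the affine cubic surface. It comes from the rational 2-torsion point `(1 : 1 : -1)`
on the curve at infinity `x ^ 3 + y ^ 3 + 2 z ^ 3 = 0`: the plane `s + w = 2` contains the tangent
line at that point and meets the surface in a line and a conic. Its local invariant vanishes at the
real place and at every odd prime for integral points, while the congruences on `x + y` and `z`
force it to be nontrivial at `2`, contradicting Hilbert reciprocity.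

Concretely, put `x = a + 2 f`, `y = a - 2 f`, `a = 1 + 4 k`, `z = 2 m` with `m` odd. The equation
becomes `k (a ^ 2 + a + 1) = -2 m ^ 3 - 3 a f ^ 2`, and up to squares the algebra is
`(-6 a b, -k)` with `b = 2 k + m`. The triviality at odd primes (`locallyTrivial_of_curve`) rests
on two identities: `-6 a b m ^ 2 - k W = (3 a f) ^ 2` with `W = 3 a (a ^ 2 + a + 1 - 4 m ^ 2)`, where
`W` is close to `9` at primes dividing both `k` and `m`, and
`b (a ^ 2 + 4 m ^ 2 + 1 - 2 a m + a + 2 m) = 3 a (m - 2 f ^ 2)`, which shows that `-k` is a square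
modulo the primes dividing `b`. Hilbert reciprocity itself is deduced, for squarefree coefficients
of the required 2-adic shape, from quadratic reciprocity for Jacobi symbols (`reciprocity`).
-/

open NumberTheorySymbols

/-! ### Local symbols at odd primes -/

/-- Triviality of the Hilbert symbol `(M, N)_p` at an odd prime `p`, for squarefree `M` and `N`,
expressed through the tame symbol according to which of `M`, `N` are divisible by `p`. If `p`
divides neither, the symbol is automatically trivial and nothing is required. -/
def LocallyTrivial (p : ℕ) (M N : ℤ) : Prop :=
  ((p : ℤ) ∣ N → ¬ (p : ℤ) ∣ M → J(M | p) = 1) ∧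
  ((p : ℤ) ∣ M → ¬ (p : ℤ) ∣ N → J(N | p) = 1) ∧
  (∀ A B : ℤ, M = p * A → N = p * B → J(-(A * B) | p) = 1)

lemma jacobiSym_eq_one_of_dvd {p : ℕ} (hp : p.Prime) {a x y : ℤ} (ha : ¬ (p : ℤ) ∣ a)
    (hy : ¬ (p : ℤ) ∣ y) (h : (p : ℤ) ∣ x ^ 2 - a * y ^ 2) : J(a | p) = 1 := by
  have := Fact.mk hp
  rw [← jacobiSym.legendreSym.to_jacobiSym]
  refine legendreSym.eq_one_of_sq_sub_mul_sq_eq_zero (x := (x : ZMod p)) (y := (y : ZMod p))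
    ?_ ?_ ?_
  · rwa [Ne, ZMod.intCast_zmod_eq_zero_iff_dvd]
  · rwa [Ne, ZMod.intCast_zmod_eq_zero_iff_dvd]
  · have := (ZMod.intCast_zmod_eq_zero_iff_dvd _ p).2 h
    exact_mod_cast this

/-- Infinite descent: if `-αβ` is a nonsquare modulo `p`, the ternary form
`α X² + β Y² + p γ T²` with `α, β, γ` prime to `p` is anisotropic. -/
lemma isotropic_descent {p : ℕ} (hp : p.Prime) {α β γ : ℤ} (hα : ¬ (p : ℤ) ∣ α)
    (hβ : ¬ (p : ℤ) ∣ β) (hγ : ¬ (p : ℤ) ∣ γ) (hJ : J(-(α * β) | p) ≠ 1) (n : ℕ) :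
    ∀ X Y T : ℤ, X.natAbs + Y.natAbs + T.natAbs = n →
      α * X ^ 2 + β * Y ^ 2 + p * γ * T ^ 2 = 0 → X = 0 ∧ Y = 0 ∧ T = 0 := by
  have hp' : Prime (p : ℤ) := Nat.prime_iff_prime_int.1 hp
  have hp0 : (p : ℤ) ≠ 0 := hp'.ne_zero
  induction n using Nat.strong_induction_on with
  | _ n ih =>
  intro X Y T hn h
  have hd : (p : ℤ) ∣ α * X ^ 2 + β * Y ^ 2 := ⟨-(γ * T ^ 2), by linear_combination h⟩
  have hY : (p : ℤ) ∣ Y := by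
    by_contra hY
    refine hJ (jacobiSym_eq_one_of_dvd hp (x := α * X) (y := Y) ?_ hY ?_)
    · rw [dvd_neg]
      intro h'
      rcases hp'.dvd_or_dvd h' with h' | h'
      · exact hα h'
      · exact hβ h'
    · obtain ⟨c, hc⟩ := hd
      exact ⟨α * c, by linear_combination α * hc⟩
  obtain ⟨Y', rfl⟩ := hY
  have hX : (p : ℤ) ∣ X := by
    have h1 : (p : ℤ) ∣ α * X ^ 2 := by
      have h2 : (p : ℤ) ∣ β * (p * Y') ^ 2 := ⟨β * p * Y' ^ 2, by ring⟩
      exact (dvd_add_left h2).1 hd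
    exact hp'.dvd_of_dvd_pow ((hp'.dvd_or_dvd h1).resolve_left hα)
  obtain ⟨X', rfl⟩ := hX
  have h1 : (p : ℤ) * (α * X' ^ 2 + β * Y' ^ 2) + γ * T ^ 2 = 0 := by
    refine mul_left_cancel₀ hp0 ?_
    linear_combination h
  have hT : (p : ℤ) ∣ T := by
    have h2 : (p : ℤ) ∣ γ * T ^ 2 := ⟨-(α * X' ^ 2 + β * Y' ^ 2), by linear_combination h1⟩
    exact hp'.dvd_of_dvd_pow ((hp'.dvd_or_dvd h2).resolve_left hγ)
  obtain ⟨T', rfl⟩ := hT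
  have h2 : α * X' ^ 2 + β * Y' ^ 2 + p * γ * T' ^ 2 = 0 := by
    refine mul_left_cancel₀ hp0 ?_
    linear_combination h1
  simp only [Int.natAbs_mul, Int.natAbs_natCast] at hn
  rcases Nat.eq_zero_or_pos (X'.natAbs + Y'.natAbs + T'.natAbs) with h0 | h0
  · have hx : X' = 0 := by omega
    have hy : Y' = 0 := by omega
    have ht : T' = 0 := by omega
    simp [hx, hy, ht]
  · have hlt : X'.natAbs + Y'.natAbs + T'.natAbs < n := by
      rw [← hn, ← mul_add, ← mul_add]
      have := hp.two_le
      nlinarith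
    obtain ⟨rfl, rfl, rfl⟩ := ih _ hlt X' Y' T' rfl h2
    simp

lemma jacobiSym_eq_one_of_isotropic {p : ℕ} (hp : p.Prime) {α β γ X Y T : ℤ}
    (hα : ¬ (p : ℤ) ∣ α) (hβ : ¬ (p : ℤ) ∣ β) (hγ : ¬ (p : ℤ) ∣ γ)
    (h : α * X ^ 2 + β * Y ^ 2 + p * γ * T ^ 2 = 0) (h0 : ¬ (X = 0 ∧ Y = 0 ∧ T = 0)) :
    J(-(α * β) | p) = 1 := by
  by_contra hJ
  exact h0 (isotropic_descent hp hα hβ hγ hJ _ X Y T rfl h)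

lemma not_dvd_of_squarefree {p : ℕ} (hp : p.Prime) {c : ℤ} (h : Squarefree ((p : ℤ) * c)) :
    ¬ (p : ℤ) ∣ c := by
  rintro ⟨d, rfl⟩
  have := h p ⟨d, by ring⟩
  exact (Nat.prime_iff_prime_int.1 hp).not_isUnit this

/-- If `M X² + N W T² = Z²` with `W` a nonzero square modulo `p`, hence a `p`-adic square, then
`(M, N)_p` is trivial. -/
lemma locallyTrivial_of_isotropic {p : ℕ} (hp : p.Prime) {M N W w X T Z : ℤ}
    (hM : Squarefree M) (hN : Squarefree N) (h : M * X ^ 2 + N * W * T ^ 2 = Z ^ 2)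
    (hT : T ≠ 0) (hw : (p : ℤ) ∣ w ^ 2 - W) (hpw : ¬ (p : ℤ) ∣ w) : LocallyTrivial p M N := by
  have hp' : Prime (p : ℤ) := Nat.prime_iff_prime_int.1 hp
  have hp1 : ¬ (p : ℤ) ∣ -1 := by
    rw [dvd_neg]
    exact fun h => hp'.not_isUnit (isUnit_of_dvd_one h)
  have hpW : ¬ (p : ℤ) ∣ W := fun h' => hpw (hp'.dvd_of_dvd_pow ((dvd_sub_left h').1 hw))
  have hJW : J(W | p) = 1 :=
    jacobiSym_eq_one_of_dvd hp (x := w) (y := 1) hpW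
      (fun h => hp'.not_isUnit (isUnit_of_dvd_one h)) (by simpa using hw)
  refine ⟨?_, ?_, ?_⟩
  · rintro ⟨c, rfl⟩ h2
    have hc := not_dvd_of_squarefree hp hN
    have := jacobiSym_eq_one_of_isotropic hp (α := M) (β := -1) (γ := c * W) (X := X) (Y := Z)
      (T := T) h2 hp1 (fun h' => (hp'.dvd_or_dvd h').elim hc hpW) (by linear_combination h)
      (fun h0 => hT h0.2.2)
    simpa using this
  · rintro ⟨c, rfl⟩ h2
    have hc := not_dvd_of_squarefree hp hM
    have := jacobiSym_eq_one_of_isotropic hp (α := N * W) (β := -1) (γ := c) (X := T) (Y := Z)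
      (T := X) (fun h' => (hp'.dvd_or_dvd h').elim h2 hpW) hp1 hc (by linear_combination h)
      (fun h0 => hT h0.1)
    rw [mul_neg_one, neg_neg, jacobiSym.mul_left, hJW, mul_one] at this
    exact this
  · rintro A B rfl rfl
    have hA := not_dvd_of_squarefree hp hM
    have hB := not_dvd_of_squarefree hp hN
    have hZ : (p : ℤ) ∣ Z :=
      hp'.dvd_of_dvd_pow (n := 2) ⟨A * X ^ 2 + B * W * T ^ 2, by linear_combination -h⟩
    obtain ⟨Z', rfl⟩ := hZ
    have := jacobiSym_eq_one_of_isotropic hp (α := A) (β := B * W) (γ := -1) (X := X) (Y := T)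
      (T := Z') hA (fun h' => (hp'.dvd_or_dvd h').elim hB hpW) hp1
      (mul_left_cancel₀ hp'.ne_zero (by linear_combination h)) (fun h0 => hT h0.2.1)
    rw [show -(A * (B * W)) = -(A * B) * W by ring, jacobiSym.mul_left, hJW, mul_one] at this
    exact this

/-! ### Hilbert reciprocity from quadratic reciprocity -/

lemma jacobiSym_eq_one_of_primes {a : ℤ} (n : ℕ) (hn : n ≠ 0)
    (h : ∀ p : ℕ, p.Prime → p ∣ n → J(a | p) = 1) : J(a | n) = 1 := by
  induction n using Nat.recOnMul with
  | zero => exact absurd rfl hn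
  | one => simp
  | prime p hp => exact h p hp dvd_rfl
  | mul x y hx hy =>
    have hx0 : x ≠ 0 := by rintro rfl; simp at hn
    have hy0 : y ≠ 0 := by rintro rfl; simp at hn
    have := NeZero.mk hx0
    have := NeZero.mk hy0
    rw [jacobiSym.mul_right, hx hx0 fun p hp hd => h p hp (hd.mul_right _),
      hy hy0 fun p hp hd => h p hp (hd.mul_left _), one_mul]

lemma jacobiSym_of_sq_mul {a c : ℤ} {n : ℕ} (h : J(c ^ 2 * a | n) = 1) : J(a | n) = 1 := by
  rw [jacobiSym.mul_left, jacobiSym.pow_left] at h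
  rcases jacobiSym.trichotomy c n with h' | h' | h' <;> simp [h'] at h <;> exact h

/-- Legendre's normal form: dividing out `h = gcd(μ, ν)`, the conditions at all odd primes collect
into three Jacobi symbol identities in pairwise coprime integers. -/
lemma exists_jacobiSym_eq_one {μ ν ε : ℤ} (hε : ε = 1 ∨ ε = 2) (hμ : Odd μ) (hν : Odd ν)
    (hM : Squarefree (2 * μ)) (hN : Squarefree (ε * ν))
    (hloc : ∀ p : ℕ, p.Prime → p ≠ 2 → LocallyTrivial p (2 * μ) (ε * ν)) :
    ∃ (h : ℕ) (A B : ℤ), μ = h * A ∧ ν = h * B ∧ J(2 * (h * A) | B.natAbs) = 1 ∧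
      J(ε * (h * B) | A.natAbs) = 1 ∧ J(-(2 * ε) * (A * B) | h) = 1 := by
  have hμ0 : μ ≠ 0 := by rintro rfl; simp at hμ
  have hν0 : ν ≠ 0 := by rintro rfl; simp at hν
  obtain ⟨A, hA⟩ := Int.gcd_dvd_left (a := μ) (b := ν)
  obtain ⟨B, hB⟩ := Int.gcd_dvd_right (a := μ) (b := ν)
  have hpos : 0 < Int.gcd μ ν := Int.gcd_pos_of_ne_zero_left _ hμ0
  have hcop : IsCoprime A B := by
    have h1 := Int.gcd_eq_gcd_ab μ ν
    refine ⟨Int.gcdA μ ν, Int.gcdB μ ν, ?_⟩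
    have h3 : ((Int.gcd μ ν : ℕ) : ℤ) ≠ 0 := by exact_mod_cast hpos.ne'
    apply mul_left_cancel₀ h3
    linear_combination -h1 - hA * Int.gcdA μ ν - hB * Int.gcdB μ ν
  generalize Int.gcd μ ν = h at *
  subst hA hB
  have hA0 : A ≠ 0 := by rintro rfl; simp at hμ0
  have hB0 : B ≠ 0 := by rintro rfl; simp at hν0
  rw [Int.odd_mul] at hμ hν
  have odd_prime : ∀ {p : ℕ} {c : ℤ}, p.Prime → Odd c → (p : ℤ) ∣ c → p ≠ 2 := by
    rintro p c hp hc hd rfl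
    exact (Int.not_even_iff_odd.2 hc) (even_iff_two_dvd.2 hd)
  have ndvd2 : ∀ {p : ℕ}, p.Prime → p ≠ 2 → ¬ (p : ℤ) ∣ 2 := by
    intro p hp h2 hd
    exact h2 ((Nat.prime_dvd_prime_iff_eq hp Nat.prime_two).1 (by exact_mod_cast hd))
  have ndvdε : ∀ {p : ℕ}, p.Prime → p ≠ 2 → ¬ (p : ℤ) ∣ ε := by
    rintro p hp h2 hd
    rcases hε with rfl | rfl
    · exact (Nat.prime_iff_prime_int.1 hp).not_isUnit (isUnit_of_dvd_one hd)
    · exact ndvd2 hp h2 hd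
  refine ⟨h, A, B, rfl, rfl, ?_, ?_, ?_⟩
  · refine jacobiSym_eq_one_of_primes _ (Int.natAbs_ne_zero.2 hB0) fun p hp hd => ?_
    have hd' : (p : ℤ) ∣ B := Int.natCast_dvd.2 hd
    have hp2 := odd_prime hp hν.2 hd'
    have hp' := Nat.prime_iff_prime_int.1 hp
    refine (hloc p hp hp2).1 ((hd'.mul_left _).mul_left _) ?_
    intro h1
    rcases hp'.dvd_or_dvd h1 with h1 | h1
    · exact ndvd2 hp hp2 h1
    rcases hp'.dvd_or_dvd h1 with h1 | h1
    · refine hp'.not_isUnit (hN _ ?_)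
      exact (mul_dvd_mul h1 hd').mul_left _
    · exact hp'.not_isUnit (hcop.isUnit_of_dvd' h1 hd')
  · refine jacobiSym_eq_one_of_primes _ (Int.natAbs_ne_zero.2 hA0) fun p hp hd => ?_
    have hd' : (p : ℤ) ∣ A := Int.natCast_dvd.2 hd
    have hp2 := odd_prime hp hμ.2 hd'
    have hp' := Nat.prime_iff_prime_int.1 hp
    refine (hloc p hp hp2).2.1 ((hd'.mul_left _).mul_left _) ?_
    intro h1
    rcases hp'.dvd_or_dvd h1 with h1 | h1
    · exact ndvdε hp hp2 h1
    rcases hp'.dvd_or_dvd h1 with h1 | h1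
    · refine hp'.not_isUnit (hM _ ?_)
      exact (mul_dvd_mul h1 hd').mul_left _
    · exact hp'.not_isUnit (hcop.isUnit_of_dvd' hd' h1)
  · refine jacobiSym_eq_one_of_primes _ hpos.ne' fun p hp hd => ?_
    have hp2 := odd_prime hp hμ.1 (by exact_mod_cast hd)
    obtain ⟨c, rfl⟩ := hd
    refine jacobiSym_of_sq_mul (c := c) ?_
    have := (hloc p hp hp2).2.2 (2 * (c * A)) (ε * (c * B)) (by push_cast; ring)
      (by push_cast; ring)
    rw [← this]
    congr 1
    ring

lemma jacobiSym_two_eq {n : ℕ} (hn : Odd n) :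
    J(2 | n) = if n % 8 = 1 ∨ n % 8 = 7 then 1 else -1 := by
  rw [jacobiSym.at_two hn, ZMod.χ₈_nat_eq_if_mod_eight]
  have : n % 2 ≠ 0 := by have := Nat.odd_iff.1 hn; omega
  simp [this]

lemma jacobiSym_neg_one_eq {n : ℕ} (hn : Odd n) :
    J(-1 | n) = if n % 4 = 1 then 1 else -1 := by
  rw [jacobiSym.at_neg_one hn, ZMod.χ₄_nat_eq_if_mod_four]
  have : n % 2 ≠ 0 := by have := Nat.odd_iff.1 hn; omega
  simp [this]

lemma jacobiSym_swap {m n : ℕ} (hm : Odd m) (hn : Odd n) :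
    J((m : ℤ) | n) = if m % 4 = 3 ∧ n % 4 = 3 then -J((n : ℤ) | m) else J((n : ℤ) | m) := by
  have hm' := Nat.odd_iff.1 hm
  have hn' := Nat.odd_iff.1 hn
  split_ifs with h
  · exact jacobiSym.quadratic_reciprocity_three_mod_four h.1 h.2
  · rcases Nat.odd_mod_four_iff.1 hm' with h1 | h1
    · exact jacobiSym.quadratic_reciprocity_one_mod_four h1 hn
    · have h2 : n % 4 = 1 := by omega
      exact jacobiSym.quadratic_reciprocity_one_mod_four' hm h2

lemma int_sign_cases (A : ℤ) : A = A.natAbs ∨ A = -1 * A.natAbs := by omega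

/-- The three Jacobi symbol identities are incompatible, by quadratic reciprocity, with residues
modulo 8 for which `(2μ, εν)₂ = -1`. Here `s`, `t` are the signs of the coefficients, at least one
of them positive. -/
lemma no_triple {h α β : ℕ} {s t μ ν ε : ℤ} (hh : Odd h) (hα : Odd α) (hβ : Odd β)
    (hst : (s = 1 ∧ t = 1) ∨ (s = 1 ∧ t = -1) ∨ (s = -1 ∧ t = 1))
    (hμ : μ = h * (s * α)) (hν : ν = h * (t * β))
    (h1 : J(2 * (h * (s * α)) | β) = 1) (h2 : J(ε * (h * (t * β)) | α) = 1)
    (h3 : J(-(2 * ε) * (s * α * (t * β)) | h) = 1)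
    (hres : (ε = 1 ∧ (μ % 4 = 3 ∧ ν % 8 = 7 ∨ μ % 4 = 1 ∧ ν % 8 = 3)) ∨
      (ε = 2 ∧ (ν % 8 = 3 * μ % 8 ∨ ν % 8 = (3 * μ + 2) % 8))) : False := by
  have e : -(2 * ε) * (s * α * (t * β)) = -1 * (2 * ε * (s * α * (t * β))) := by ring
  rw [e] at h3
  simp only [jacobiSym.mul_left] at h1 h2 h3
  rw [jacobiSym_swap hh hβ] at h1
  rw [jacobiSym_swap hh hα, jacobiSym_swap hβ hα] at h2
  rw [jacobiSym_two_eq hβ] at h1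
  rw [jacobiSym_two_eq hh, jacobiSym_neg_one_eq hh] at h3
  have hab := jacobiSym.trichotomy α β
  have hah := jacobiSym.trichotomy α h
  have hbh := jacobiSym.trichotomy β h
  generalize J((α : ℤ) | β) = u at *
  generalize J((α : ℤ) | h) = v at *
  generalize J((β : ℤ) | h) = w at *
  have hu : u = 1 ∨ u = -1 := by
    rcases hab with rfl | h | h
    · simp at h1
    · exact Or.inl h
    · exact Or.inr h
  have hv : v = 1 ∨ v = -1 := by
    rcases hah with rfl | h | h
    · simp at h3
    · exact Or.inl h
    · exact Or.inr h
  have hw : w = 1 ∨ w = -1 := by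
    rcases hbh with rfl | h | h
    · simp at h3
    · exact Or.inl h
    · exact Or.inr h
  clear hab hah hbh e
  have key : ∀ n : ℕ, Odd n → n % 8 = 1 ∨ n % 8 = 3 ∨ n % 8 = 5 ∨ n % 8 = 7 := by
    intro n hn
    have := Nat.odd_iff.1 hn
    omega
  have hμ8 : μ % 8 = ((h % 8 : ℕ) * (s * (α % 8 : ℕ))) % 8 := by
    rw [hμ]; push_cast; simp [Int.mul_emod]
  have hν8 : ν % 8 = ((h % 8 : ℕ) * (t * (β % 8 : ℕ))) % 8 := by
    rw [hν]; push_cast; simp [Int.mul_emod]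
  have hμ4 : μ % 4 = (μ % 8) % 4 := by omega
  have hμ3 : (3 * μ) % 8 = (3 * (μ % 8)) % 8 := by omega
  have hμ5 : (3 * μ + 2) % 8 = (3 * (μ % 8) + 2) % 8 := by omega
  have hh4 : h % 4 = h % 8 % 4 := by omega
  have hα4 : α % 4 = α % 8 % 4 := by omega
  have hβ4 : β % 4 = β % 8 % 4 := by omega
  rw [hμ4, hμ3, hμ5, hμ8, hν8] at hres
  rw [hh4, hβ4] at h1
  rw [hh4, hα4, hβ4] at h2
  rw [hh4] at h3
  rcases hst with ⟨rfl, rfl⟩ | ⟨rfl, rfl⟩ | ⟨rfl, rfl⟩ <;>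
  rcases hres with ⟨rfl, hres⟩ | ⟨rfl, hres⟩ <;>
  simp only [jacobiSym_two_eq hα, jacobiSym_two_eq hh, jacobiSym_neg_one_eq hh,
    jacobiSym_neg_one_eq hα, jacobiSym_neg_one_eq hβ, jacobiSym.one_left, hh4, hα4, hβ4]
    at h1 h2 h3 <;>
  clear hμ hν hμ8 hν8 hμ4 hμ3 hμ5 hh4 hα4 hβ4 <;>
  rcases key h hh with kh | kh | kh | kh <;>
  rcases key α hα with ka | ka | ka | ka <;>
  rcases key β hβ with kb | kb | kb | kb <;>
  rw [kh, ka, kb] at hres <;>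
  norm_num at hres <;>
  simp only [kh, ka, kb] at h1 h2 h3 <;>
  rcases hu with rfl | rfl <;> rcases hv with rfl | rfl <;> rcases hw with rfl | rfl <;>
  revert h1 h2 h3 <;> decide

/-- The instance of Hilbert reciprocity for `(2μ, εν)`: the symbol cannot be trivial at the real
place and at all odd primes when the residues `hres` make it nontrivial at `2`. -/
lemma reciprocity {μ ν ε : ℤ} (hε : ε = 1 ∨ ε = 2) (hμ : Odd μ) (hν : Odd ν)
    (hM : Squarefree (2 * μ)) (hN : Squarefree (ε * ν))
    (hloc : ∀ p : ℕ, p.Prime → p ≠ 2 → LocallyTrivial p (2 * μ) (ε * ν))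
    (hsign : ¬ (μ < 0 ∧ ν < 0))
    (hres : (ε = 1 ∧ (μ % 4 = 3 ∧ ν % 8 = 7 ∨ μ % 4 = 1 ∧ ν % 8 = 3)) ∨
      (ε = 2 ∧ (ν % 8 = 3 * μ % 8 ∨ ν % 8 = (3 * μ + 2) % 8))) : False := by
  obtain ⟨h, A, B, hA, hB, h1, h2, h3⟩ := exists_jacobiSym_eq_one hε hμ hν hM hN hloc
  have oμ := hμ
  have oν := hν
  rw [hA, Int.odd_mul] at oμ
  rw [hB, Int.odd_mul] at oν
  have oh : Odd h := by exact_mod_cast oμ.1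
  have oA : Odd A.natAbs := Int.natAbs_odd.2 oμ.2
  have oB : Odd B.natAbs := Int.natAbs_odd.2 oν.2
  have hpos : (0 : ℤ) < h := by exact_mod_cast oh.pos
  obtain ⟨s, t, hst, hs, ht⟩ : ∃ s t : ℤ, ((s = 1 ∧ t = 1) ∨ (s = 1 ∧ t = -1) ∨
      (s = -1 ∧ t = 1)) ∧ A = s * A.natAbs ∧ B = t * B.natAbs := by
    rcases le_or_gt 0 A with hA0 | hA0 <;> rcases le_or_gt 0 B with hB0 | hB0
    · exact ⟨1, 1, by simp, by omega, by omega⟩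
    · exact ⟨1, -1, by simp, by omega, by omega⟩
    · exact ⟨-1, 1, by simp, by omega, by omega⟩
    · exact absurd ⟨hA ▸ mul_neg_of_pos_of_neg hpos hA0, hB ▸ mul_neg_of_pos_of_neg hpos hB0⟩
        hsign
  generalize A.natAbs = α at *
  generalize B.natAbs = β at *
  subst hs ht
  exact no_triple oh oA oB hst hA hB h1 h2 h3 hres

/-! ### The local invariants on the surface -/

lemma exists_squarefree_part {n : ℤ} (hn : n ≠ 0) :
    ∃ c t : ℤ, n = c * t ^ 2 ∧ Squarefree c ∧ t ≠ 0 ∧ c ≠ 0 := by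
  obtain ⟨a, b, hab, ha⟩ := Nat.sq_mul_squarefree n.natAbs
  have hn' : n.natAbs ≠ 0 := Int.natAbs_ne_zero.2 hn
  have hb : (b : ℤ) ≠ 0 := by rintro hb; simp at hb; subst hb; simp at hab; omega
  have hnn : (n.natAbs : ℤ) = b ^ 2 * a := by exact_mod_cast hab.symm
  rcases int_sign_cases n with h | h
  · refine ⟨a, b, by rw [h, hnn]; ring, ?_, hb, ?_⟩
    · rw [← Int.squarefree_natAbs]; simpa using ha
    · rintro h0; rw [h0] at hnn; simp at hnn; exact hn hnn
  · refine ⟨-a, b, by rw [h, hnn]; ring, ?_, hb, ?_⟩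
    · rw [← Int.squarefree_natAbs]; simpa using ha
    · rintro h0; simp at h0; rw [h0] at hnn; simp at hnn; exact hn hnn

lemma squarefree_two_mul {c : ℤ} (hc : Squarefree c) (ho : Odd c) : Squarefree (2 * c) := by
  rw [squarefree_mul_iff]
  refine ⟨?_, Int.prime_two.squarefree, hc⟩
  exact (Int.isCoprime_two_left.2 ho).isRelPrime

lemma zmod_eight_sq {n : ℤ} (hn : Odd n) : ((n : ZMod 8)) ^ 2 = 1 := by
  obtain ⟨j, rfl⟩ := hn
  push_cast
  generalize (j : ZMod 8) = j
  revert j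
  decide

lemma zmod_eight_iff (n c : ℤ) : (n : ZMod 8) = (c : ZMod 8) ↔ n % 8 = c % 8 :=
  ZMod.intCast_eq_intCast_iff' n c 8

/-- At every odd prime the symbol `(-6ab, -k)`, with `a = 1 + 4k` and `b = 2k + m`, is trivial;
`M` and `N` are the squarefree parts of its entries. -/
lemma locallyTrivial_of_curve {k m f M N r t : ℤ} (hk0 : k ≠ 0)
    (E : k * ((1 + 4 * k) ^ 2 + (1 + 4 * k) + 1) = -2 * m ^ 3 - 3 * (1 + 4 * k) * f ^ 2)
    (hM : Squarefree M) (hN : Squarefree N)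
    (hMr : -6 * (1 + 4 * k) * (2 * k + m) = M * r ^ 2) (hNt : -k = N * t ^ 2)
    {p : ℕ} (hp : p.Prime) (hp2 : p ≠ 2) : LocallyTrivial p M N := by
  have hp' := Nat.prime_iff_prime_int.1 hp
  have ht : t ≠ 0 := by rintro rfl; simp at hNt; exact hk0 hNt
  have hp1 : ¬ (p : ℤ) ∣ 1 := fun h => hp'.not_isUnit (isUnit_of_dvd_one h)
  have hp2' : ¬ (p : ℤ) ∣ 2 := fun h =>
    hp2 ((Nat.prime_dvd_prime_iff_eq hp Nat.prime_two).1 (by exact_mod_cast h))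
  have key : M * (r * m) ^ 2 + N * (3 * (1 + 4 * k) *
      ((1 + 4 * k) ^ 2 + (1 + 4 * k) + 1 - 4 * m ^ 2)) * t ^ 2 = (3 * (1 + 4 * k) * f) ^ 2 := by
    linear_combination (-m ^ 2) * hMr - (3 * (1 + 4 * k) *
      ((1 + 4 * k) ^ 2 + (1 + 4 * k) + 1 - 4 * m ^ 2)) * hNt - 3 * (1 + 4 * k) * E
  by_cases hp3 : p = 3
  · subst hp3
    by_cases hm : (3 : ℤ) ∣ m
    -- If `3 ∣ m`, then `3 ∣ k` and `W / 9` is congruent to `1` modulo 3.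
    · obtain ⟨m', rfl⟩ := hm
      have hk : (3 : ℤ) ∣ k := by
        have h2 : (3 : ℤ) ∣ k ^ 3 := ⟨-18 * m' ^ 3 - (1 + 4 * k) * f ^ 2
          - (5 * k ^ 3 + 4 * k ^ 2 + k), by linear_combination E⟩
        exact Int.prime_three.dvd_of_dvd_pow h2
      obtain ⟨k', rfl⟩ := hk
      refine locallyTrivial_of_isotropic hp hM hN (w := 1) (X := r * (3 * m')) (T := 3 * t)
        (Z := 3 * (1 + 4 * (3 * k')) * f)
        (W := (1 + 12 * k') * (1 + 12 * k' + 48 * k' ^ 2 - 12 * m' ^ 2)) ?_ (by simpa using ht)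
        ?_ hp1
      · rw [← key]; ring
      · refine ⟨-(4 * k' * (1 + 12 * k' + 48 * k' ^ 2 - 12 * m' ^ 2)
          + (4 * k' + 16 * k' ^ 2 - 4 * m' ^ 2)), ?_⟩
        push_cast
        ring
    -- Here the equation modulo 9 makes `-k` congruent to `1` modulo 3.
    · have hk : k % 3 = 2 := by
        have h9 : ∀ k m f : ZMod 9, k * ((1 + 4 * k) ^ 2 + (1 + 4 * k) + 1) =
          -2 * m ^ 3 - 3 * (1 + 4 * k) * f ^ 2 → 3 * m ≠ 0 → 3 * k = 6 := by decide
        have e := h9 k m f (by exact_mod_cast congrArg (Int.cast : ℤ → ZMod 9) E) (by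
          intro h
          have h' : ((3 * m : ℤ) : ZMod 9) = 0 := by exact_mod_cast h
          rw [ZMod.intCast_zmod_eq_zero_iff_dvd] at h'
          omega)
        have e' : ((3 * k : ℤ) : ZMod 9) = (6 : ℤ) := by exact_mod_cast e
        rw [ZMod.intCast_eq_intCast_iff'] at e'
        omega
      have hN3 : ¬ ((3 : ℕ) : ℤ) ∣ N := by
        intro h
        have : (3 : ℤ) ∣ -k := hNt ▸ h.mul_right _
        omega
      have ht3 : ¬ ((3 : ℕ) : ℤ) ∣ t := by
        intro h
        have : (3 : ℤ) ∣ -k := hNt ▸ (h.pow two_ne_zero).mul_left _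
        omega
      refine ⟨fun h => absurd h hN3, fun _ _ => ?_, fun A B _ h => absurd ⟨B, h⟩ hN3⟩
      refine jacobiSym_eq_one_of_dvd hp (x := 1) (y := t) hN3 ht3 ?_
      rw [← hNt]
      push_cast
      omega
  have hp3' : ¬ (p : ℤ) ∣ 3 := fun h =>
    hp3 ((Nat.prime_dvd_prime_iff_eq hp Nat.prime_three).1 (by exact_mod_cast h))
  by_cases hk : (p : ℤ) ∣ k
  · by_cases hm : (p : ℤ) ∣ m
    · refine locallyTrivial_of_isotropic hp hM hN (w := 3) key ht ?_ hp3'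
      have : (p : ℤ) ∣ k * -(192 * k ^ 2 + 192 * k + 72) + m * (12 * (1 + 4 * k) * m) :=
        dvd_add (hk.mul_right _) (hm.mul_right _)
      convert this using 1
      ring
    · have hMr' : ¬ (p : ℤ) ∣ M * r ^ 2 := by
        rw [← hMr]
        intro h
        have h1 : (p : ℤ) ∣ 2 * (3 * m) := by
          have : (p : ℤ) ∣ k * (-12 - 24 * m - 48 * k) -
            (-6 * (1 + 4 * k) * (2 * k + m)) := dvd_sub (hk.mul_right _) h
          convert this using 1
          ring
        rcases hp'.dvd_or_dvd h1 with h1 | h1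
        · exact hp2' h1
        rcases hp'.dvd_or_dvd h1 with h1 | h1
        · exact hp3' h1
        · exact hm h1
      have hpM : ¬ (p : ℤ) ∣ M := fun h => hMr' (h.mul_right _)
      have hpr : ¬ (p : ℤ) ∣ r := fun h => hMr' ((h.pow two_ne_zero).mul_left _)
      refine ⟨fun _ _ => ?_, fun h => absurd h hpM, fun A B h => absurd ⟨A, h⟩ hpM⟩
      refine jacobiSym_eq_one_of_dvd hp (x := 3 * (1 + 4 * k) * f) (y := r * m) hpM
        (fun h => (hp'.dvd_or_dvd h).elim hpr hm) ?_
      rw [← key]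
      have : (p : ℤ) ∣ -k * -(3 * (1 + 4 * k) *
        ((1 + 4 * k) ^ 2 + (1 + 4 * k) + 1 - 4 * m ^ 2)) * -1 :=
        (((dvd_neg.2 hk).mul_right _).mul_right _)
      rw [hNt] at this
      convert this using 1
      ring
  · have hpN : ¬ (p : ℤ) ∣ N := fun h => hk (by rw [← dvd_neg, hNt]; exact h.mul_right _)
    have hpt : ¬ (p : ℤ) ∣ t := fun h =>
      hk (by rw [← dvd_neg, hNt]; exact (h.pow two_ne_zero).mul_left _)
    refine ⟨fun h => absurd h hpN, fun h _ => ?_, fun A B _ h => absurd ⟨B, h⟩ hpN⟩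
    by_cases ha : (p : ℤ) ∣ 1 + 4 * k
    · refine jacobiSym_eq_one_of_dvd hp (x := 1) (y := 2 * t) hpN
        (fun h => (hp'.dvd_or_dvd h).elim hp2' hpt) ?_
      convert ha using 1
      linear_combination 4 * hNt
    · have h1 : (p : ℤ) ∣ 2 * (3 * ((1 + 4 * k) * (2 * k + m))) := by
        rw [← dvd_neg]
        obtain ⟨c, hc⟩ : (p : ℤ) ∣ M * r ^ 2 := h.mul_right _
        exact ⟨c, by linear_combination hc + hMr⟩
      have hb : (p : ℤ) ∣ 2 * k + m :=
        (hp'.dvd_or_dvd (((hp'.dvd_or_dvd (((hp'.dvd_or_dvd h1).resolve_left hp2'))).resolve_left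
          hp3'))).resolve_left ha
      have h2 : (p : ℤ) ∣ 2 * (3 * ((1 + 4 * k) * (k + f ^ 2))) := by
        have : (p : ℤ) ∣ (2 * k + m) * (3 * (1 + 4 * k) - ((1 + 4 * k) ^ 2 + 4 * m ^ 2 + 1
          - 2 * (1 + 4 * k) * m + (1 + 4 * k) + 2 * m)) := hb.mul_right _
        convert this using 1
        linear_combination 2 * E
      have h3 : (p : ℤ) ∣ k + f ^ 2 :=
        (hp'.dvd_or_dvd (((hp'.dvd_or_dvd (((hp'.dvd_or_dvd h2).resolve_left hp2'))).resolve_left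
          hp3'))).resolve_left ha
      refine jacobiSym_eq_one_of_dvd hp (x := f) (y := t) hpN hpt ?_
      convert h3 using 1
      linear_combination hNt

/-- The entries `-6ab` and `-k` are not both negative, so the symbol is trivial at the real
place. -/
lemma no_real_obstruction {k m f : ℤ}
    (E : k * ((1 + 4 * k) ^ 2 + (1 + 4 * k) + 1) = -2 * m ^ 3 - 3 * (1 + 4 * k) * f ^ 2)
    (hk : 0 < k) (hab : 0 < (1 + 4 * k) * (2 * k + m)) : False := by
  have hb : 0 < 2 * k + m := pos_of_mul_pos_right hab (by omega)
  have h1 : 0 < k * ((1 + 4 * k) ^ 2 + (1 + 4 * k) + 1) := by positivity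
  have h2 : 0 ≤ 3 * (1 + 4 * k) * f ^ 2 := by positivity
  have hm : m < 0 := by
    by_contra hm
    push Not at hm
    have : 0 ≤ m ^ 3 := by positivity
    linarith
  have hQ : 0 < (1 + 4 * k) ^ 2 + 4 * m ^ 2 + 1
      - 2 * (1 + 4 * k) * m + (1 + 4 * k) + 2 * m := by nlinarith
  have h3 : (2 * k + m) * ((1 + 4 * k) ^ 2 + 4 * m ^ 2 + 1
      - 2 * (1 + 4 * k) * m + (1 + 4 * k) + 2 * m) = 3 * (1 + 4 * k) * (m - 2 * f ^ 2) := by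
    linear_combination 2 * E
  have h4 := mul_pos hb hQ
  rw [h3] at h4
  have : 0 < 3 * (1 + 4 * k) * -(m - 2 * f ^ 2) := mul_pos (by omega) (by nlinarith)
  linarith

/-- The equation in the coordinates `k, m, f`. For `m` odd, `(-6ab, -k)₂ = -1`; this is checked
modulo 8, separately for `k` odd and for `k = 2 · odd`, the only possibilities. -/
lemma no_reduced_solution {k m f : ℤ} (hm : Odd m)
    (E : k * ((1 + 4 * k) ^ 2 + (1 + 4 * k) + 1) = -2 * m ^ 3 - 3 * (1 + 4 * k) * f ^ 2) :
    False := by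
  have hk0 : k ≠ 0 := by
    rintro rfl
    have h8 : ∀ m f : ZMod 8, 0 * ((1 + 4 * 0) ^ 2 + (1 + 4 * 0) + 1) =
      -2 * m ^ 3 - 3 * (1 + 4 * 0) * f ^ 2 → m ^ 2 ≠ 1 := by decide
    exact h8 m f (by exact_mod_cast congrArg (Int.cast : ℤ → ZMod 8) E) (zmod_eight_sq hm)
  have hab : Odd (-3 * (1 + 4 * k) * (2 * k + m)) := by
    refine Odd.mul (Odd.mul (by decide) ⟨2 * k, by ring⟩) ?_
    exact Even.add_odd ⟨k, by ring⟩ hm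
  obtain ⟨μ, r, hμr, hμ, hr, -⟩ := exists_squarefree_part (n := -3 * (1 + 4 * k) * (2 * k + m))
    (by intro h; rw [h] at hab; simp at hab)
  have hμo : Odd μ := by rw [hμr, Int.odd_mul] at hab; exact hab.1
  have hro : Odd r := by
    rw [hμr, Int.odd_mul] at hab
    exact (Int.odd_pow' two_ne_zero).1 hab.2
  have hμ8 : (μ : ZMod 8) = -3 * (1 + 4 * k) * (2 * k + m) := by
    have := congrArg (Int.cast : ℤ → ZMod 8) hμr
    push_cast [zmod_eight_sq hro] at this
    rw [this, mul_one]
  have hsign : ∀ ν : ℤ, (ν < 0 → 0 < k) → ¬ (μ < 0 ∧ ν < 0) := by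
    rintro ν hν ⟨h1, h2⟩
    refine no_real_obstruction E (hν h2) ?_
    have : μ * r ^ 2 < 0 := mul_neg_of_neg_of_pos h1 (by positivity)
    rw [← hμr] at this
    linarith
  rcases Int.even_or_odd k with hk | hk
  · obtain ⟨k, rfl⟩ := hk
    have hf : Even f := by
      by_contra hf
      rw [Int.not_even_iff_odd] at hf
      have h1 : Odd (3 * (1 + 4 * (k + k)) * f ^ 2) :=
        Odd.mul (Odd.mul (by decide) ⟨4 * k, by ring⟩) hf.pow
      refine (Int.not_even_iff_odd.2 h1) ⟨-m ^ 3 - k * ((1 + 4 * (k + k)) ^ 2 +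
        (1 + 4 * (k + k)) + 1), ?_⟩
      linear_combination E
    obtain ⟨f, rfl⟩ := hf
    have E' : k * ((1 + 8 * k) ^ 2 + (1 + 8 * k) + 1) = - m ^ 3 - 6 * (1 + 8 * k) * f ^ 2 := by
      refine mul_left_cancel₀ (two_ne_zero) ?_
      linear_combination E
    have hk : Odd k := by
      by_contra hk
      rw [Int.not_odd_iff_even] at hk
      obtain ⟨j, rfl⟩ := hk
      refine (Int.not_even_iff_odd.2 (hm.pow (n := 3))) ⟨-3 * (1 + 8 * (j + j)) * f ^ 2 -
        j * ((1 + 8 * (j + j)) ^ 2 + (1 + 8 * (j + j)) + 1), ?_⟩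
      linear_combination E'
    obtain ⟨ν, t, hνt, hν, ht, -⟩ := exists_squarefree_part (n := -k) (by omega)
    have hko : Odd (-k) := hk.neg
    have hνo : Odd ν := by rw [hνt, Int.odd_mul] at hko; exact hko.1
    have hto : Odd t := by
      rw [hνt, Int.odd_mul] at hko
      exact (Int.odd_pow' two_ne_zero).1 hko.2
    have hν8 : (ν : ZMod 8) = -k := by
      have := congrArg (Int.cast : ℤ → ZMod 8) hνt
      push_cast [zmod_eight_sq hto] at this
      rw [this, mul_one]
    refine reciprocity (Or.inr rfl) hμo hνo (squarefree_two_mul hμ hμo)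
      (squarefree_two_mul hν hνo)
      (fun p hp hp2 => locallyTrivial_of_curve hk0 E (squarefree_two_mul hμ hμo)
        (squarefree_two_mul hν hνo) (r := r) (t := t) (by linear_combination 2 * hμr)
        (by linear_combination 2 * hνt) hp hp2)
      (hsign ν fun h => ?_) (Or.inr ⟨rfl, ?_⟩)
    · have : ν * t ^ 2 < 0 := mul_neg_of_neg_of_pos h (by positivity)
      omega
    · have h8 : ∀ k m f : ZMod 8, k * ((1 + 8 * k) ^ 2 + (1 + 8 * k) + 1) =
          - m ^ 3 - 6 * (1 + 8 * k) * f ^ 2 → m ^ 2 = 1 →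
          (-k = 3 * (-3 * (1 + 4 * (k + k)) * (2 * (k + k) + m)) ∨
            -k = 3 * (-3 * (1 + 4 * (k + k)) * (2 * (k + k) + m)) + 2) := by decide
      have := h8 k m f (by exact_mod_cast congrArg (Int.cast : ℤ → ZMod 8) E') (zmod_eight_sq hm)
      push_cast at hμ8
      rw [← hμ8, ← hν8] at this
      rw [← zmod_eight_iff, ← zmod_eight_iff]
      push_cast
      exact this
  · obtain ⟨ν, t, hνt, hν, ht, -⟩ := exists_squarefree_part (n := -k) (by omega)
    have hko : Odd (-k) := hk.neg
    have hνo : Odd ν := by rw [hνt, Int.odd_mul] at hko; exact hko.1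
    have hto : Odd t := by
      rw [hνt, Int.odd_mul] at hko
      exact (Int.odd_pow' two_ne_zero).1 hko.2
    have hν8 : (ν : ZMod 8) = -k := by
      have := congrArg (Int.cast : ℤ → ZMod 8) hνt
      push_cast [zmod_eight_sq hto] at this
      rw [this, mul_one]
    have hν' : Squarefree (1 * ν) := by rwa [one_mul]
    refine reciprocity (Or.inl rfl) hμo hνo (squarefree_two_mul hμ hμo) hν'
      (fun p hp hp2 => locallyTrivial_of_curve hk0 E (squarefree_two_mul hμ hμo)
        hν' (r := r) (t := t) (by linear_combination 2 * hμr)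
        (by linear_combination hνt) hp hp2)
      (hsign ν fun h => ?_) (Or.inl ⟨rfl, ?_⟩)
    · have : ν * t ^ 2 < 0 := mul_neg_of_neg_of_pos h (by positivity)
      omega
    · have h8 : ∀ k m f : ZMod 8, k * ((1 + 4 * k) ^ 2 + (1 + 4 * k) + 1) =
          -2 * m ^ 3 - 3 * (1 + 4 * k) * f ^ 2 → m ^ 2 = 1 → k ^ 2 = 1 →
          (2 * (-3 * (1 + 4 * k) * (2 * k + m)) = 6 ∧ -k = 7) ∨
          (2 * (-3 * (1 + 4 * k) * (2 * k + m)) = 2 ∧ -k = 3) := by decide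
      have := h8 k m f (by exact_mod_cast congrArg (Int.cast : ℤ → ZMod 8) E) (zmod_eight_sq hm)
        (zmod_eight_sq hk)
      rw [← hμ8, ← hν8] at this
      have e2 := zmod_eight_iff (2 * μ) 2
      have e6 := zmod_eight_iff (2 * μ) 6
      have g3 := zmod_eight_iff ν 3
      have g7 := zmod_eight_iff ν 7
      push_cast at e2 e6 g3 g7
      rw [e2, e6, g3, g7] at this
      omega

theorem no_integral_points_cubic_with_congruences :
    ¬ ∃ x y z : ℤ, x ^ 3 + y ^ 3 + 2 * z ^ 3 = 2 ∧
      x + y ≡ 2 [ZMOD 8] ∧ z ≡ 2 [ZMOD 4] := by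
  rintro ⟨x, y, z, h, hs, hz⟩
  obtain ⟨k, hk⟩ : ∃ k, x + y = 2 * (1 + 4 * k) := ⟨(x + y) / 8, by
    unfold Int.ModEq at hs; omega⟩
  obtain ⟨j, hj⟩ : ∃ j, z = 2 * (2 * j + 1) := ⟨z / 4, by unfold Int.ModEq at hz; omega⟩
  obtain ⟨e, he⟩ : ∃ e, x = (1 + 4 * k) + e := ⟨x - (1 + 4 * k), by ring⟩
  have hy : y = (1 + 4 * k) - e := by omega
  subst he hy hj
  have h1 : (1 + 4 * k) * ((1 + 4 * k) ^ 2 + 3 * e ^ 2) = 1 - 8 * (2 * j + 1) ^ 3 := by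
    refine mul_left_cancel₀ (two_ne_zero) ?_
    linear_combination h
  have he : Even e := by
    by_contra he
    rw [Int.not_even_iff_odd] at he
    obtain ⟨i, rfl⟩ := he
    have h2 : (2 : ℤ) ∣ 1 := ⟨(1 + 4 * k) * (8 * k ^ 2 + 4 * k + 6 * i ^ 2 + 6 * i + 2)
      + 4 * (2 * j + 1) ^ 3, by linear_combination -h1⟩
    omega
  obtain ⟨f, rfl⟩ := he
  refine no_reduced_solution (k := k) (m := 2 * j + 1) (f := f) ⟨j, rfl⟩ ?_
  refine mul_left_cancel₀ (four_ne_zero) ?_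
  linear_combination h1
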